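/- arXiv:2408.07764 — 2 statements merged into one kernel-verified Lean document; each statement's English description precedes it below -/
import Mathlib

section
/- For q = 2^s with s ≥ 2 and all β, γ ∈ F_q, the matrix identity U_β^{(7)} · X^γ · U_β^{(7)} = ε(tr(βγ^7)) · X^γ · U^{(3)}_{(βγ)^{2^{s−1}} + βγ^4} · U^{(5)}_{βγ^2} · Z^{(βγ^3)^{2^{s−2}} + (βγ^5)^{2^{s−1}} + βγ^6} holds in the q×q complex matrices (here x ↦ x^{2^{s−1}} and x ↦ x^{2^{s−2}} are the unique square-root and fourth-root maps in F_q). -/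
noncomputable section

/-- The trace map `tr : F_{2^s} → F_2 ⊆ F_{2^s}`, `tr γ = Σ_{i=0}^{s-1} γ^{2^i}`
(its values lie in the prime field `{0, 1}`). -/
def trF {F : Type} [Field F] (s : ℕ) (x : F) : F := ∑ i ∈ Finset.range s, x ^ 2 ^ i

/-- `ε ∘ tr : F_{2^s} → ℂ`, where `ε 0 = 1` and `ε 1 = -1` on the prime field `F_2`. -/
def epsTr {F : Type} [Field F] [DecidableEq F] (s : ℕ) (x : F) : ℂ := if trF s x = 0 then 1 else -1

/-- The Pauli `X^β`: `(X^β)_{η,η'} = 1` if `η = η' + β`, else `0`. -/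
def Xm {F : Type} [Field F] [Fintype F] [DecidableEq F] (β : F) : Matrix F F ℂ :=
  Matrix.of fun η η' => if η = η' + β then 1 else 0

/-- The Pauli `Z^γ`: diagonal with entry `ε(tr(γη))` at `η`. -/
def Zm {F : Type} [Field F] [Fintype F] [DecidableEq F] (s : ℕ) (γ : F) : Matrix F F ℂ :=
  Matrix.diagonal fun η => epsTr s (γ * η)

/-- The diagonal gate `U_β^{(n)}` with diagonal entry `ε(tr(β η^n))` at `η`. -/
def Um {F : Type} [Field F] [Fintype F] [DecidableEq F] (s : ℕ) (n : ℕ) (β : F) :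
    Matrix F F ℂ :=
  Matrix.diagonal fun η => epsTr s (β * η ^ n)

theorem charP_two_aux {s : ℕ} (hs : 2 ≤ s) {F : Type} [Field F] [Fintype F]
    (hF : Fintype.card F = 2 ^ s) : CharP F 2 := by
  have h : ((2 ^ s : ℕ) : F) = 0 := by rw [← hF]; exact Nat.cast_card_eq_zero F
  have h2 : (2 : F) = 0 := by
    push_cast at h
    exact pow_eq_zero_iff (by omega) |>.1 h
  exact CharTwo.of_one_ne_zero_of_two_eq_zero one_ne_zero h2

theorem trF_add_aux {s : ℕ} {F : Type} [Field F] [CharP F 2] (x y : F) :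
    trF s (x + y) = trF s x + trF s y := by
  simp only [trF, add_pow_char_pow, Finset.sum_add_distrib]

theorem trF_sq_aux {s : ℕ} {F : Type} [Field F] [Fintype F]
    (hF : Fintype.card F = 2 ^ s) (x : F) : trF s (x ^ 2) = trF s x := by
  have h1 := Finset.sum_range_succ (fun i => x ^ 2 ^ i) s
  have h2 := Finset.sum_range_succ' (fun i => x ^ 2 ^ i) s
  rw [h1, ← hF, FiniteField.pow_card] at h2
  simp only [pow_zero, pow_one] at h2
  have h3 := add_right_cancel h2
  simp only [trF]
  rw [h3]
  refine Finset.sum_congr rfl fun i _ => ?_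
  rw [← pow_mul, pow_succ']

theorem trF_mem_aux {s : ℕ} {F : Type} [Field F] [Fintype F] [CharP F 2]
    (hF : Fintype.card F = 2 ^ s) (x : F) : trF s x = 0 ∨ trF s x = 1 := by
  have h : trF s x ^ 2 = trF s x := by
    conv_rhs => rw [← trF_sq_aux hF]
    simp only [trF, CharTwo.sum_sq]
    refine Finset.sum_congr rfl fun i _ => ?_
    rw [← pow_mul, ← pow_mul, mul_comm]
  have h' : trF s x * (trF s x - 1) = 0 := by linear_combination h
  rcases mul_eq_zero.1 h' with h | h
  · exact Or.inl h
  · exact Or.inr (sub_eq_zero.1 h)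

theorem epsTr_add_aux {s : ℕ} {F : Type} [Field F] [Fintype F] [DecidableEq F] [CharP F 2]
    (hF : Fintype.card F = 2 ^ s) (x y : F) :
    epsTr s (x + y) = epsTr s x * epsTr s y := by
  have h11 : (1 : F) + 1 = 0 := CharTwo.add_self_eq_zero 1
  unfold epsTr
  rw [trF_add_aux]
  rcases trF_mem_aux hF x with h | h <;> rcases trF_mem_aux hF y with h' | h' <;>
    simp [h, h', h11]

/-- For `q = 2^s`, `s ≥ 2`:
`U_β^{(7)} X^γ U_β^{(7)} = ε(tr(βγ^7)) X^γ U^{(3)}_{(βγ)^{2^{s-1}} + βγ^4} U^{(5)}_{βγ^2}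
  Z^{(βγ^3)^{2^{s-2}} + (βγ^5)^{2^{s-1}} + βγ^6}`
(here `x ↦ x^{2^{s−1}}` and `x ↦ x^{2^{s−2}}` are the unique square- and fourth-root maps). -/
theorem U7_conjugation_identity
    {s : ℕ} (hs : 2 ≤ s) {F : Type} [Field F] [Fintype F] [DecidableEq F]
    (hF : Fintype.card F = 2 ^ s) (β γ : F) :
    Um s 7 β * Xm γ * Um s 7 β =
      epsTr s (β * γ ^ 7) •
        (Xm γ * Um s 3 ((β * γ) ^ 2 ^ (s - 1) + β * γ ^ 4) * Um s 5 (β * γ ^ 2) *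
          Zm s ((β * γ ^ 3) ^ 2 ^ (s - 2) + (β * γ ^ 5) ^ 2 ^ (s - 1) + β * γ ^ 6)) := by
  have : CharP F 2 := charP_two_aux hs hF
  have e1 : ((β * γ) ^ 2 ^ (s - 1)) ^ 2 = β * γ := by
    rw [← pow_mul, ← pow_succ, Nat.sub_add_cancel (by omega), ← hF, FiniteField.pow_card]
  have e2 : ((β * γ ^ 5) ^ 2 ^ (s - 1)) ^ 2 = β * γ ^ 5 := by
    rw [← pow_mul, ← pow_succ, Nat.sub_add_cancel (by omega), ← hF, FiniteField.pow_card]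
  have e3 : (((β * γ ^ 3) ^ 2 ^ (s - 2)) ^ 2) ^ 2 = β * γ ^ 3 := by
    rw [← pow_mul, ← pow_mul, ← mul_assoc, ← pow_succ, ← pow_succ,
      show s - 2 + 1 + 1 = s by omega, ← hF, FiniteField.pow_card]
  generalize (β * γ) ^ 2 ^ (s - 1) = a at *
  generalize (β * γ ^ 5) ^ 2 ^ (s - 1) = b at *
  generalize (β * γ ^ 3) ^ 2 ^ (s - 2) = c at *
  ext η η'
  simp only [Um, Zm, Xm, Matrix.smul_apply, Matrix.mul_diagonal, Matrix.diagonal_mul,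
    Matrix.of_apply, smul_eq_mul]
  by_cases h : η = η' + γ
  · subst h
    simp only [if_true, mul_one, one_mul]
    simp only [← epsTr_add_aux hF]
    unfold epsTr
    have key : trF s (β * (η' + γ) ^ 7 + β * η' ^ 7) =
      trF s (β * γ ^ 7 + ((a + β * γ ^ 4) * η' ^ 3 + β * γ ^ 2 * η' ^ 5 +
        (c + b + β * γ ^ 6) * η')) := by
      have h1 : trF s (a * η' ^ 3) = trF s (β * γ * η' ^ 6) := by
        rw [← trF_sq_aux hF (a * η' ^ 3), mul_pow, e1]; ring_nf
      have h2 : trF s (b * η') = trF s (β * γ ^ 5 * η' ^ 2) := by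
        rw [← trF_sq_aux hF (b * η'), mul_pow, e2]
      have h3 : trF s (c * η') = trF s (β * γ ^ 3 * η' ^ 4) := by
        rw [← trF_sq_aux hF (c * η'), ← trF_sq_aux hF ((c * η') ^ 2), mul_pow, mul_pow, e3]
        ring_nf
      have hl : β * (η' + γ) ^ 7 + β * η' ^ 7 = β * γ * η' ^ 6 + β * γ ^ 2 * η' ^ 5
          + β * γ ^ 3 * η' ^ 4 + β * γ ^ 4 * η' ^ 3 + β * γ ^ 5 * η' ^ 2 + β * γ ^ 6 * η'
          + β * γ ^ 7 := by
        have h20 : (2 : F) = 0 := CharTwo.two_eq_zero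
        linear_combination (β * η' ^ 7 + 3 * β * γ * η' ^ 6 + 10 * β * γ ^ 2 * η' ^ 5
          + 17 * β * γ ^ 3 * η' ^ 4 + 17 * β * γ ^ 4 * η' ^ 3 + 10 * β * γ ^ 5 * η' ^ 2
          + 3 * β * γ ^ 6 * η') * h20
      rw [hl]
      simp only [add_mul, trF_add_aux, h1, h2, h3]
      ring
    rw [key]
  · simp [h]
end
end

section
/- For q = 2^s with s ≥ 5: for every β ∈ F_q, the diagonal matrices U_β^{(3)} and U_β^{(5)} belong to the Clifford group 𝒞; and for every β ∈ F_q with β ≠ 0, neither U_β^{(3)} nor U_β^{(5)} belongs to the Pauli group 𝒫. -/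
noncomputable section

/-- The single-qudit Pauli group (as a set of matrices):
`{z • X^β Z^γ : z ∈ {1, i, −1, −i}, β, γ ∈ F_q}`. -/
def PauliSet (s : ℕ) (F : Type) [Field F] [Fintype F] [DecidableEq F] :
    Set (Matrix F F ℂ) :=
  {M | ∃ z ∈ ({1, Complex.I, -1, -Complex.I} : Set ℂ), ∃ β γ : F, M = z • (Xm β * Zm s γ)}

/-- The single-qudit Clifford group: unitaries normalising the Pauli group. -/
def CliffordSet (s : ℕ) (F : Type) [Field F] [Fintype F] [DecidableEq F] :
    Set (Matrix F F ℂ) :=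
  {U | U ∈ unitary (Matrix F F ℂ) ∧ ∀ P ∈ PauliSet s F, U * P * star U ∈ PauliSet s F}

/-- The third level of the Clifford hierarchy: unitaries mapping Paulis into the
Clifford group under conjugation. -/
def ThirdLevelSet (s : ℕ) (F : Type) [Field F] [Fintype F] [DecidableEq F] :
    Set (Matrix F F ℂ) :=
  {U | U ∈ unitary (Matrix F F ℂ) ∧ ∀ P ∈ PauliSet s F, U * P * star U ∈ CliffordSet s F}

section helpers

variable {F : Type} [Field F]

theorem trF_add [CharP F 2] (s : ℕ) (x y : F) : trF s (x + y) = trF s x + trF s y := by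
  haveI : Fact (Nat.Prime 2) := ⟨Nat.prime_two⟩
  unfold trF
  rw [← Finset.sum_add_distrib]
  exact Finset.sum_congr rfl fun i _ => add_pow_char_pow x y 2 i

theorem trF_sq_eq (s : ℕ) (x : F) (hx : x ^ 2 ^ s = x) : trF s (x ^ 2) = trF s x := by
  unfold trF
  have h1 := Finset.sum_range_succ (fun i => x ^ 2 ^ i) s
  have h2 := Finset.sum_range_succ' (fun i => x ^ 2 ^ i) s
  rw [h1] at h2
  simp only [pow_zero, pow_one, hx] at h2
  rw [add_right_cancel h2]
  refine Finset.sum_congr rfl fun i _ => ?_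
  rw [← pow_mul, pow_succ, mul_comm]

theorem trF_sq [CharP F 2] (s : ℕ) (x : F) : trF s x ^ 2 = trF s (x ^ 2) := by
  haveI : Fact (Nat.Prime 2) := ⟨Nat.prime_two⟩
  unfold trF
  rw [sum_pow_char 2]
  refine Finset.sum_congr rfl fun i _ => ?_
  rw [← pow_mul, ← pow_mul, mul_comm]

variable [Fintype F]

theorem trF_pow {s : ℕ} (hF : Fintype.card F = 2 ^ s) (x : F) (k : ℕ) :
    trF s (x ^ 2 ^ k) = trF s x := by
  have h : ∀ y : F, y ^ 2 ^ s = y := fun y => by rw [← hF]; exact FiniteField.pow_card y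
  induction k with
  | zero => simp
  | succ k ih => rw [pow_succ, pow_mul, trF_sq_eq s _ (h _), ih]

theorem trF_zero_or_one [CharP F 2] {s : ℕ} (hF : Fintype.card F = 2 ^ s) (x : F) :
    trF s x = 0 ∨ trF s x = 1 := by
  have h : trF s x ^ 2 = trF s x := by
    rw [trF_sq]; simpa using trF_pow hF x 1
  have h2 : trF s x * (trF s x - 1) = 0 := by linear_combination h
  rcases mul_eq_zero.1 h2 with h | h
  · exact Or.inl h
  · exact Or.inr (sub_eq_zero.1 h)

theorem exists_trF_ne {s : ℕ} (hs : 5 ≤ s) (hF : Fintype.card F = 2 ^ s) :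
    ∃ x : F, trF s x ≠ 0 := by
  by_contra! hc
  let p : Polynomial F := ∑ i ∈ Finset.range s, Polynomial.X ^ 2 ^ i
  have hp : p = 0 := by
    refine Polynomial.eq_zero_of_natDegree_lt_card_of_eval_eq_zero p
      (f := (id : F → F)) Function.injective_id (fun x => ?_) ?_
    · have := hc x
      unfold trF at this
      simpa [p, Polynomial.eval_finset_sum] using this
    · rw [hF]
      refine lt_of_le_of_lt (Polynomial.natDegree_sum_le_of_forall_le (n := 2 ^ (s - 1)) _ _ ?_) ?_
      · intro i hi
        rw [Polynomial.natDegree_X_pow]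
        have := Finset.mem_range.1 hi
        exact Nat.pow_le_pow_right (by norm_num) (by omega)
      · exact Nat.pow_lt_pow_right (by norm_num) (by omega)
  have h1 : p.coeff 1 = 1 := by
    simp only [p, Polynomial.finset_sum_coeff, Polynomial.coeff_X_pow]
    rw [Finset.sum_eq_single 0]
    · simp
    · intro i _ hi
      have : 1 < 2 ^ i := Nat.one_lt_two_pow hi
      rw [if_neg (by omega)]
    · intro h
      exact absurd (Finset.mem_range.2 (by omega)) h
  rw [hp] at h1
  simp at h1

theorem trF_nondeg {s : ℕ} (hs : 5 ≤ s) (hF : Fintype.card F = 2 ^ s) (a : F)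
    (h : ∀ x, trF s (a * x) = 0) : a = 0 := by
  by_contra ha
  obtain ⟨x, hx⟩ := exists_trF_ne hs hF
  apply hx
  have := h (a⁻¹ * x)
  rwa [mul_inv_cancel_left₀ ha] at this

theorem exists_root [CharP F 2] (x : F) (k : ℕ) : ∃ y : F, y ^ 2 ^ k = x := by
  haveI : Fact (Nat.Prime 2) := ⟨Nat.prime_two⟩
  have hinj : Function.Injective (iterateFrobenius F 2 k) := (iterateFrobenius F 2 k).injective
  obtain ⟨y, hy⟩ := (Finite.injective_iff_surjective.1 hinj) x
  exact ⟨y, by simpa [iterateFrobenius_def] using hy⟩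

/-- Derivative of the quadratic form. -/
theorem trF_deriv [CharP F 2] {s : ℕ} (hF : Fintype.card F = 2 ^ s) (k : ℕ) (β b d x : F)
    (hd : d ^ 2 ^ k = β * b) :
    trF s (β * (x + b) ^ (2 ^ k + 1)) =
      trF s (β * x ^ (2 ^ k + 1)) + trF s (β * b ^ (2 ^ k + 1))
        + trF s ((d + β * b ^ 2 ^ k) * x) := by
  haveI : Fact (Nat.Prime 2) := ⟨Nat.prime_two⟩
  have e : β * (x + b) ^ (2 ^ k + 1) =
      β * x ^ (2 ^ k + 1) + β * b ^ (2 ^ k + 1) + ((d * x) ^ 2 ^ k + β * b ^ 2 ^ k * x) := by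
    rw [pow_succ, add_pow_char_pow, mul_pow, hd]; ring
  rw [e, trF_add, trF_add, trF_add, trF_pow hF, add_mul, trF_add]

variable [DecidableEq F]

theorem epsTr_add [CharP F 2] {s : ℕ} (hF : Fintype.card F = 2 ^ s) (x y : F) :
    epsTr s (x + y) = epsTr s x * epsTr s y := by
  unfold epsTr
  rw [trF_add]
  have h2 : (1 : F) + 1 = 0 := CharTwo.add_self_eq_zero 1
  rcases trF_zero_or_one hF x with h | h <;> rcases trF_zero_or_one hF y with h' | h' <;>
    simp [h, h', h2]

theorem epsTr_sq (s : ℕ) (x : F) : epsTr s x * epsTr s x = 1 := by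
  unfold epsTr; split_ifs <;> simp

theorem epsTr_star (s : ℕ) (x : F) : star (epsTr s x) = epsTr s x := by
  unfold epsTr; split_ifs <;> simp

theorem epsTr_zero (s : ℕ) : epsTr s (0 : F) = 1 := by
  simp [epsTr, trF]

theorem star_Um (s n : ℕ) (β : F) : star (Um s n β) = Um s n β := by
  unfold Um
  rw [Matrix.star_eq_conjTranspose, Matrix.diagonal_conjTranspose]
  congr 1
  funext x
  exact epsTr_star s _

theorem Um_mul_self (s n : ℕ) (β : F) : Um s n β * Um s n β = 1 := by
  unfold Um
  rw [Matrix.diagonal_mul_diagonal, ← Matrix.diagonal_one]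
  congr 1
  funext x
  exact epsTr_sq s _

theorem epsTr_deriv [CharP F 2] {s : ℕ} (hF : Fintype.card F = 2 ^ s) (k : ℕ) (β b d x : F)
    (hd : d ^ 2 ^ k = β * b) :
    epsTr s (β * (x + b) ^ (2 ^ k + 1)) =
      epsTr s (β * x ^ (2 ^ k + 1)) * epsTr s (β * b ^ (2 ^ k + 1))
        * epsTr s ((d + β * b ^ 2 ^ k) * x) := by
  rw [← epsTr_add hF, ← epsTr_add hF]
  unfold epsTr
  rw [trF_deriv hF k β b d x hd, trF_add, trF_add]

theorem Um_clifford [CharP F 2] {s : ℕ} (hF : Fintype.card F = 2 ^ s) (k : ℕ) (β : F) :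
    Um s (2 ^ k + 1) β ∈ CliffordSet s F := by
  refine ⟨?_, ?_⟩
  · rw [Unitary.mem_iff, star_Um]
    exact ⟨Um_mul_self _ _ _, Um_mul_self _ _ _⟩
  · rintro P ⟨z, hz, b, c, rfl⟩
    obtain ⟨d, hd⟩ := exists_root (β * b) k
    refine ⟨z * epsTr s (β * b ^ (2 ^ k + 1)), ?_, b, c + (d + β * b ^ 2 ^ k), ?_⟩
    · simp only [Set.mem_insert_iff, Set.mem_singleton_iff] at hz ⊢
      unfold epsTr
      split_ifs
      · simpa using hz
      · rcases hz with h | h | h | h <;> simp [h]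
    · rw [star_Um]
      ext i j
      simp only [Um, Zm, Xm, Matrix.mul_diagonal, Matrix.diagonal_mul, Matrix.smul_apply,
        Matrix.of_apply, smul_eq_mul]
      by_cases h : i = j + b
      · subst h
        rw [if_pos rfl, epsTr_deriv hF k β b d j hd, add_mul c, epsTr_add hF (c * j)]
        linear_combination (z * epsTr s (β * b ^ (2 ^ k + 1)) * epsTr s (c * j) *
          epsTr s ((d + β * b ^ 2 ^ k) * j)) * epsTr_sq s (β * j ^ (2 ^ k + 1))
      · simp [h]

theorem Um_not_pauli [CharP F 2] {s : ℕ} (hs : 5 ≤ s) (hF : Fintype.card F = 2 ^ s) (k : ℕ)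
    (hk0 : k ≠ 0) (hk : 2 * k < s) (β : F) (hβ : β ≠ 0) :
    Um s (2 ^ k + 1) β ∉ PauliSet s F := by
  rintro ⟨z, -, b, c, h⟩
  have hent : ∀ i j : F, (Um s (2 ^ k + 1) β) i j = (z • (Xm b * Zm s c)) i j :=
    fun i j => by rw [h]
  simp only [Um, Zm, Xm, Matrix.mul_diagonal, Matrix.smul_apply,
        Matrix.of_apply, smul_eq_mul] at hent
  have h0 := hent 0 0
  simp only [Matrix.diagonal_apply_eq, mul_zero, epsTr_zero, zero_add, mul_one, ne_eq,
    Nat.add_eq_zero_iff, one_ne_zero, and_false, not_false_eq_true, zero_pow] at h0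
  have hb : (0 : F) = b := by
    by_contra hb
    simp [hb] at h0
  subst hb
  have hz : z = 1 := by simpa using h0.symm
  subst hz
  have heps : ∀ x, epsTr s (β * x ^ (2 ^ k + 1)) = epsTr s (c * x) := fun x => by
    simpa using hent x x
  have htr : ∀ x, trF s (β * x ^ (2 ^ k + 1)) = trF s (c * x) := fun x => by
    have := heps x
    unfold epsTr at this
    rcases trF_zero_or_one hF (β * x ^ (2 ^ k + 1)) with h | h <;>
    rcases trF_zero_or_one hF (c * x) with h' | h' <;> rw [h, h'] at this ⊢
    · norm_num at this
    · norm_num at this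
  have key : ∀ b : F, β * b = β ^ 2 ^ k * b ^ 2 ^ (2 * k) := by
    intro b
    obtain ⟨d, hd⟩ := exists_root (β * b) k
    have hz : d + β * b ^ 2 ^ k = 0 := by
      refine trF_nondeg hs hF _ fun x => ?_
      have h1 := trF_deriv hF k β b d x hd
      rw [htr, htr, htr, mul_add, trF_add] at h1
      exact left_eq_add.1 h1
    have hd2 : d = β * b ^ 2 ^ k := CharTwo.add_eq_zero.1 hz
    rw [← hd, hd2, mul_pow, ← pow_mul, ← pow_add, two_mul]
  have k1 : β = β ^ 2 ^ k := by simpa using key 1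
  have key2 : ∀ b : F, b ^ 2 ^ (2 * k) = b := by
    intro b
    have := key b
    rw [← k1] at this
    exact (mul_left_cancel₀ hβ this).symm
  have hlt : 1 < 2 ^ (2 * k) := Nat.one_lt_two_pow (by omega)
  have hp : (Polynomial.X ^ 2 ^ (2 * k) - Polynomial.X : Polynomial F) = 0 := by
    refine Polynomial.eq_zero_of_natDegree_lt_card_of_eval_eq_zero _
      (f := (id : F → F)) Function.injective_id (fun x => ?_) ?_
    · simp [key2 x]
    · rw [FiniteField.X_pow_card_sub_X_natDegree_eq F hlt, hF]
      exact Nat.pow_lt_pow_right (by norm_num) hk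
  exact FiniteField.X_pow_card_sub_X_ne_zero F hlt hp

end helpers

/-- For `q = 2^s` with `s ≥ 5`: every `U_β^{(3)}` and `U_β^{(5)}` is Clifford, and for
`β ≠ 0` neither is a Pauli. -/
theorem U3_U5_clifford_not_pauli
    {s : ℕ} (hs : 5 ≤ s) {F : Type} [Field F] [Fintype F] [DecidableEq F]
    (hF : Fintype.card F = 2 ^ s) :
    (∀ β : F, Um s 3 β ∈ CliffordSet s F ∧ Um s 5 β ∈ CliffordSet s F) ∧
    (∀ β : F, β ≠ 0 → Um s 3 β ∉ PauliSet s F ∧ Um s 5 β ∉ PauliSet s F) := by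
  have : CharP F 2 := by
    haveI : Fact (Nat.Prime 2) := ⟨Nat.prime_two⟩
    exact charP_of_card_eq_prime_pow hF
  refine ⟨fun β => ⟨?_, ?_⟩, fun β hβ => ⟨?_, ?_⟩⟩
  · exact Um_clifford hF 1 β
  · exact Um_clifford hF 2 β
  · exact Um_not_pauli hs hF 1 (by norm_num) (by omega) β hβ
  · exact Um_not_pauli hs hF 2 (by norm_num) (by omega) β hβ
end
end
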